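/- Consider the complete graph on the five vertices {0, a, x, y, z} with vertex weights w(a) = 2 and w(0) = w(x) = w(y) = w(z) = 1, and edge weights w(i,j) = w(i)·w(j). Every triangle-free subgraph H of weight strictly greater than 8 satisfies: H is bipartite; the vertices 0, x, y, z lie in a common connected component of H with the distance in H from 0 to each of x, y, z at most 2; and for every 2-colouring c of the vertices that is proper on H (i.e., c(u) ≠ c(v) for every edge (u,v) of H) one has c(0) + c(x) + c(y) + c(z) = 1 in ℤ/2. -/

import Mathlib

/-- The vertex weight on the five vertices `{0, a, x, y, z}`, encoded as `Fin 5` with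
`0 ↦ 0`, `1 ↦ a`, `2 ↦ x`, `3 ↦ y`, `4 ↦ z`: the vertex `a` has weight `2`, all others
weight `1`. -/
def w5 : Fin 5 → ℕ := fun i => if i = 1 then 2 else 1

/-!
Let `s` be the neighbourhood of a vertex of largest weighted degree. It is independent because the
graph is triangle-free, so every edge has an end outside `s`, and the weight of the edges is at most
`∑ v ∉ s, w v * deg v ≤ w(s) * w(sᶜ) ≤ (W / 2) ^ 2`, where `W` is the total vertex weight. Here
`W = 6`, so a weight above `8` forces equality throughout: the graph is complete bipartite between
`s` and `sᶜ`, and both sides have weight `3`.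

A proper `2`-colouring `c` is then constant on each side, with values that sum to `1`, so that
`∑ v, w v * c v = 3 = 1` in `ℤ/2`. The vertex `a` has even weight and drops out of the sum.
-/

open Finset

variable {V R : Type*}

theorem eq_of_add_sq_le_four_mul [CommSemiring R] [LinearOrder R] [IsStrictOrderedRing R]
    [ExistsAddOfLE R] {a b : R} (h : (a + b) ^ 2 ≤ 4 * a * b) : a = b := by
  wlog hab : a ≤ b generalizing a b
  · exact (this (by convert h using 1 <;> ring) (le_of_not_ge hab)).symm
  obtain ⟨d, rfl⟩ := exists_add_of_le hab
  have hd : d ^ 2 + 4 * a * (a + d) ≤ 4 * a * (a + d) := by convert h using 1; ring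
  have hd0 : d = 0 := pow_eq_zero_iff two_ne_zero |>.mp <|
    (nonpos_of_add_le_left hd).antisymm (sq_nonneg d)
  rw [hd0, add_zero]

theorem eq_of_subset_of_sum_eq [AddCommMonoid R] [PartialOrder R] [IsOrderedCancelAddMonoid R]
    {s t : Finset V} {f : V → R} (hf : ∀ v ∈ t, 0 < f v) (hst : s ⊆ t)
    (h : ∑ v ∈ s, f v = ∑ v ∈ t, f v) : s = t := by
  refine hst.antisymm fun v hvt ↦ ?_
  by_contra hvs
  exact (sum_lt_sum_of_subset hst hvt hvs (hf v hvt) fun u hu _ ↦ (hf u hu).le).ne h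

theorem isBipartiteWith_compl_of_neighborSet_subset {G : SimpleGraph V} {s : Set V}
    (hs : G.IsIndepSet s) (h : ∀ v ∉ s, G.neighborSet v ⊆ s) : G.IsBipartiteWith s sᶜ where
  disjoint := disjoint_compl_right
  mem_of_adj u v huv := by
    by_cases hu : u ∈ s
    · exact .inl ⟨hu, fun hv ↦ hs hu hv huv.ne huv⟩
    · exact .inr ⟨hu, h u hu huv⟩

section WeightedDegree

variable [Fintype V] (G : SimpleGraph V) [DecidableRel G.Adj]

/-- The weighted degree of `v` in a graph with vertex weights `w`: the total weight of the
neighbours of `v`. -/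
def weightedDegree [AddCommMonoid R] (w : V → R) (v : V) : R :=
  ∑ u ∈ G.neighborFinset v, w u

theorem two_mul_sum_adj_lt_eq_sum_mul_weightedDegree [LinearOrder V] [CommSemiring R] (w : V → R) :
    2 * ∑ q : V × V with q.1 < q.2 ∧ G.Adj q.1 q.2, w q.1 * w q.2 =
      ∑ v, w v * weightedDegree G w v := by
  have hswap : ∑ q : V × V with q.2 < q.1 ∧ G.Adj q.1 q.2, w q.1 * w q.2 =
      ∑ q : V × V with q.1 < q.2 ∧ G.Adj q.1 q.2, w q.1 * w q.2 :=
    sum_equiv (Equiv.prodComm V V) (by simp [G.adj_comm]) fun q _ ↦ mul_comm _ _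
  have hsplit : ∑ q : V × V with G.Adj q.1 q.2, w q.1 * w q.2 =
      ∑ q : V × V with q.1 < q.2 ∧ G.Adj q.1 q.2, w q.1 * w q.2 +
        ∑ q : V × V with q.2 < q.1 ∧ G.Adj q.1 q.2, w q.1 * w q.2 := by
    rw [← sum_union (disjoint_filter.mpr fun q _ h h' ↦ lt_asymm h.1 h'.1), ← filter_or]
    refine sum_congr (filter_congr fun q _ ↦ ?_) fun _ _ ↦ rfl
    rw [← or_and_right, ← ne_iff_lt_or_gt]
    exact ⟨fun h ↦ ⟨h.ne, h⟩, And.right⟩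
  have hdeg : ∑ v, w v * weightedDegree G w v = ∑ q : V × V with G.Adj q.1 q.2, w q.1 * w q.2 := by
    simp only [weightedDegree, mul_sum, SimpleGraph.neighborFinset_eq_filter, sum_filter, mul_ite,
      mul_zero, Fintype.sum_prod_type]
  rw [hdeg, hsplit, hswap, two_mul]

variable {G} {s : Finset V}

theorem sum_mul_weightedDegree_of_isIndepSet [DecidableEq V] [CommSemiring R]
    (hs : G.IsIndepSet s) (w : V → R) :
    ∑ v, w v * weightedDegree G w v =
      ∑ v ∈ sᶜ, w v * (∑ u ∈ s with G.Adj v u, w u + weightedDegree G w v) := by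
  have hinside : ∀ v ∈ s, weightedDegree G w v = ∑ u ∈ sᶜ with G.Adj v u, w u := by
    intro v hv
    refine sum_congr (ext fun u ↦ ?_) fun _ _ ↦ rfl
    simp only [SimpleGraph.mem_neighborFinset, mem_filter, mem_compl]
    exact ⟨fun h ↦ ⟨fun hu ↦ hs hv hu h.ne h, h⟩, And.right⟩
  have hcross : ∑ v ∈ s, w v * weightedDegree G w v =
      ∑ v ∈ sᶜ, w v * ∑ u ∈ s with G.Adj v u, w u := by
    rw [sum_congr rfl fun v hv ↦ by rw [hinside v hv]]
    simp only [mul_sum, sum_filter, mul_ite, mul_zero]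
    rw [sum_comm]
    simp only [G.adj_comm, mul_comm]
  simp only [mul_add, sum_add_distrib, ← hcross, sum_add_sum_compl]

variable {w : V → R}

theorem sum_filter_adj_add_weightedDegree_le [AddCommMonoid R] [PartialOrder R]
    [IsOrderedAddMonoid R] (hw : ∀ v, 0 ≤ w v) {v : V}
    (hdeg : weightedDegree G w v ≤ ∑ u ∈ s, w u) :
    ∑ u ∈ s with G.Adj v u, w u + weightedDegree G w v ≤ ∑ u ∈ s, w u + ∑ u ∈ s, w u :=
  add_le_add (sum_le_sum_of_subset_of_nonneg (filter_subset _ _) fun u _ _ ↦ hw u) hdeg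

variable [DecidableEq V]

theorem sum_mul_weightedDegree_le [CommSemiring R] [PartialOrder R] [IsOrderedRing R]
    (hw : ∀ v, 0 ≤ w v) (hs : G.IsIndepSet s)
    (hdeg : ∀ v ∉ s, weightedDegree G w v ≤ ∑ u ∈ s, w u) :
    ∑ v, w v * weightedDegree G w v ≤ 2 * (∑ v ∈ s, w v) * ∑ v ∈ sᶜ, w v := by
  rw [sum_mul_weightedDegree_of_isIndepSet hs w, mul_comm (2 * _), sum_mul, two_mul]
  exact sum_le_sum fun v hv ↦ mul_le_mul_of_nonneg_left
    (sum_filter_adj_add_weightedDegree_le hw (hdeg v (mem_compl.mp hv))) (hw v)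

theorem neighborFinset_eq_of_sum_mul_weightedDegree_eq [CommSemiring R] [LinearOrder R]
    [IsStrictOrderedRing R] (hw : ∀ v, 0 < w v) (hs : G.IsIndepSet s)
    (hdeg : ∀ v ∉ s, weightedDegree G w v ≤ ∑ u ∈ s, w u)
    (heq : ∑ v, w v * weightedDegree G w v = 2 * (∑ v ∈ s, w v) * ∑ v ∈ sᶜ, w v)
    {v : V} (hv : v ∉ s) : G.neighborFinset v = s := by
  have hle : ∀ u ∈ sᶜ, ∑ x ∈ s with G.Adj u x, w x + weightedDegree G w u ≤
      ∑ x ∈ s, w x + ∑ x ∈ s, w x := fun u hu ↦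
    sum_filter_adj_add_weightedDegree_le (fun x ↦ (hw x).le) (hdeg u (mem_compl.mp hu))
  have hsum : ∑ x ∈ s with G.Adj v x, w x + weightedDegree G w v =
      ∑ x ∈ s, w x + ∑ x ∈ s, w x := by
    rw [sum_mul_weightedDegree_of_isIndepSet hs w, mul_comm (2 * _), sum_mul, two_mul,
      sum_eq_sum_iff_of_le fun u hu ↦ mul_le_mul_of_nonneg_left (hle u hu) (hw u).le] at heq
    exact (mul_left_cancel_iff_of_pos (hw v)).mp (heq v (mem_compl.mpr hv))
  have hfilter_le : ∑ x ∈ s with G.Adj v x, w x ≤ ∑ x ∈ s, w x :=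
    sum_le_sum_of_subset_of_nonneg (filter_subset _ _) fun x _ _ ↦ (hw x).le
  obtain ⟨hfilter, hdeg_eq⟩ := (add_eq_add_iff_eq_and_eq hfilter_le (hdeg v hv)).mp hsum
  have hsubset : s ⊆ G.neighborFinset v := fun x hx ↦ by
    rw [← eq_of_subset_of_sum_eq (fun x _ ↦ hw x) (filter_subset _ _) hfilter] at hx
    exact (G.mem_neighborFinset v x).mpr (mem_filter.mp hx).2
  exact (eq_of_subset_of_sum_eq (fun x _ ↦ hw x) hsubset hdeg_eq.symm).symm

/-- The equality case of Mantel's theorem with vertex weights. -/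
theorem exists_isBipartiteWith_isCompleteBetween_of_sq_sum_le [Nonempty V] [CommSemiring R]
    [LinearOrder R] [IsStrictOrderedRing R] [ExistsAddOfLE R]
    (hG : G.CliqueFree 3) (hw : ∀ v, 0 < w v)
    (h : (∑ v, w v) ^ 2 ≤ 2 * ∑ v, w v * weightedDegree G w v) :
    ∃ s : Finset V, G.IsBipartiteWith s (s : Set V)ᶜ ∧ G.IsCompleteBetween s (s : Set V)ᶜ ∧
      ∑ v ∈ s, w v = ∑ v ∈ sᶜ, w v := by
  obtain ⟨v₀, hmax⟩ := Finite.exists_max (weightedDegree G w)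
  set s := G.neighborFinset v₀ with hs_def
  have hs : G.IsIndepSet s := by
    rw [hs_def, SimpleGraph.coe_neighborFinset]
    exact G.isIndepSet_neighborSet_of_triangleFree hG v₀
  have hle := sum_mul_weightedDegree_le (fun v ↦ (hw v).le) hs fun v _ ↦ hmax v
  have hsq : (∑ v ∈ s, w v + ∑ v ∈ sᶜ, w v) ^ 2 ≤ 2 * ∑ v, w v * weightedDegree G w v := by
    rwa [sum_add_sum_compl]
  have hsum : ∑ v ∈ s, w v = ∑ v ∈ sᶜ, w v := eq_of_add_sq_le_four_mul <| by
    calc (∑ v ∈ s, w v + ∑ v ∈ sᶜ, w v) ^ 2 ≤ 2 * ∑ v, w v * weightedDegree G w v := hsq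
      _ ≤ 2 * (2 * (∑ v ∈ s, w v) * ∑ v ∈ sᶜ, w v) := mul_le_mul_of_nonneg_left hle zero_le_two
      _ = 4 * (∑ v ∈ s, w v) * ∑ v ∈ sᶜ, w v := by ring
  have hge : 2 * (∑ v ∈ s, w v) * ∑ v ∈ sᶜ, w v ≤ ∑ v, w v * weightedDegree G w v := by
    refine le_of_mul_le_mul_left (hsq.trans' (le_of_eq ?_)) zero_lt_two
    rw [← hsum]
    ring
  have hnbr : ∀ v ∉ s, G.neighborSet v = s := fun v hv ↦ by
    rw [← G.coe_neighborFinset, neighborFinset_eq_of_sum_mul_weightedDegree_eq hw hs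
      (fun u _ ↦ hmax u) (hle.antisymm hge) hv]
  exact ⟨s, isBipartiteWith_compl_of_neighborSet_subset hs fun v hv ↦ (hnbr v hv).subset,
    fun u hu v hv ↦ ((hnbr v hv).superset hu).symm, hsum⟩

end WeightedDegree

section IsCompleteBetween

variable {G : SimpleGraph V}

theorem edist_le_two_of_isCompleteBetween_compl {s : Set V} (h : G.IsCompleteBetween s sᶜ)
    (hs : s.Nonempty) (hsc : sᶜ.Nonempty) (u v : V) : G.edist u v ≤ 2 := by
  obtain ⟨a, ha⟩ := hs
  obtain ⟨b, hb⟩ := hsc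
  by_cases hu : u ∈ s <;> by_cases hv : v ∈ s
  · exact (SimpleGraph.Walk.cons (h hu hb) (h hv hb).symm.toWalk).edist_le
  · exact (h hu hv).toWalk.edist_le.trans (by simp)
  · exact (h hv hu).symm.toWalk.edist_le.trans (by simp)
  · exact (SimpleGraph.Walk.cons (h ha hu).symm (h ha hv).toWalk).edist_le

theorem sum_mul_coloring_eq_of_isCompleteBetween_compl [Fintype V] [DecidableEq V] {s : Finset V}
    (h : G.IsCompleteBetween s (s : Set V)ᶜ) (hs : s.Nonempty) (hsc : sᶜ.Nonempty)
    {w : V → ZMod 2} (hw : ∑ v ∈ s, w v = ∑ v ∈ sᶜ, w v) {c : V → ZMod 2}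
    (hc : ∀ u v, G.Adj u v → c u ≠ c v) : ∑ v, w v * c v = ∑ v ∈ s, w v := by
  have add_eq_one : ∀ p q : ZMod 2, p ≠ q → p + q = 1 := by decide
  have hcross : ∀ u ∈ s, ∀ v ∈ sᶜ, c u + c v = 1 := fun u hu v hv ↦
    add_eq_one _ _ (hc u v (h hu (by simpa using hv)))
  obtain ⟨a, ha⟩ := hs
  obtain ⟨b, hb⟩ := hsc
  have hc_left : ∀ u ∈ s, c u = c a := fun u hu ↦
    add_right_cancel ((hcross u hu b hb).trans (hcross a ha b hb).symm)
  have hc_right : ∀ v ∈ sᶜ, c v = c b := fun v hv ↦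
    add_left_cancel ((hcross a ha v hv).trans (hcross a ha b hb).symm)
  calc ∑ v, w v * c v = ∑ v ∈ s, w v * c v + ∑ v ∈ sᶜ, w v * c v := (sum_add_sum_compl s _).symm
    _ = ∑ v ∈ s, w v * c a + ∑ v ∈ sᶜ, w v * c b := by
      congr 1
      · exact sum_congr rfl fun v hv ↦ by rw [hc_left v hv]
      · exact sum_congr rfl fun v hv ↦ by rw [hc_right v hv]
    _ = (∑ v ∈ s, w v) * (c a + c b) := by rw [← sum_mul, ← sum_mul, ← hw, mul_add]
    _ = ∑ v ∈ s, w v := by rw [hcross a ha b hb, mul_one]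

end IsCompleteBetween

theorem stmt_10_general [Fintype V] [Nonempty V] [LinearOrder V] (G : SimpleGraph V)
    [DecidableRel G.Adj] (hG : G.CliqueFree 3) {w : V → ℕ} (hw : ∀ v, 0 < w v) {k : ℕ}
    (hk : ∑ v, w v = 2 * k)
    (h : k ^ 2 ≤ ∑ q : V × V with q.1 < q.2 ∧ G.Adj q.1 q.2, w q.1 * w q.2) :
    G.Colorable 2 ∧ (∀ u v, G.edist u v ≤ 2) ∧
      ∀ c : V → ZMod 2, (∀ u v, G.Adj u v → c u ≠ c v) → ∑ v, w v * c v = k := by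
  have hsq : (∑ v, w v) ^ 2 ≤ 2 * ∑ v, w v * weightedDegree G w v := by
    rw [← two_mul_sum_adj_lt_eq_sum_mul_weightedDegree, hk]
    linarith
  obtain ⟨s, hbip, hcomplete, hsum⟩ :=
    exists_isBipartiteWith_isCompleteBetween_of_sq_sum_le hG hw hsq
  have hsk : ∑ v ∈ s, w v = k := by
    have := sum_add_sum_compl s w
    lia
  have hk_ne : k ≠ 0 := by
    have : 0 < ∑ v, w v := sum_pos (fun v _ ↦ hw v) univ_nonempty
    lia
  have hs : s.Nonempty := nonempty_of_sum_ne_zero (hsk.trans_ne hk_ne)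
  have hsc : sᶜ.Nonempty := nonempty_of_sum_ne_zero ((hsum.symm.trans hsk).trans_ne hk_ne)
  refine ⟨SimpleGraph.isBipartite_iff_exists_isBipartiteWith.mpr ⟨_, _, hbip⟩,
    edist_le_two_of_isCompleteBetween_compl hcomplete hs (coe_compl s ▸ hsc),
    fun c hc ↦ ?_⟩
  have hcolor := sum_mul_coloring_eq_of_isCompleteBetween_compl hcomplete hs hsc
    (w := fun v ↦ (w v : ZMod 2)) (mod_cast congrArg (Nat.cast : ℕ → ZMod 2) hsum) hc
  rw [hcolor, ← hsk, Nat.cast_sum]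

/-- Every triangle-free subgraph `H` of the complete graph on `{0, a, x, y, z}` (with edge
weights `w(i)·w(j)`) of total weight strictly greater than `8` is bipartite; the vertices
`0, x, y, z` lie in a common connected component of `H`, with the distance in `H` from `0`
to each of `x, y, z` at most `2`; and every `2`-colouring `c` that is proper on `H`
satisfies `c 0 + c x + c y + c z = 1` in `ℤ/2`. -/
theorem stmt_10 (H : SimpleGraph (Fin 5)) [DecidableRel H.Adj] (htf : H.CliqueFree 3)
    (hw : 8 < ∑ q ∈ Finset.univ.filter (fun q : Fin 5 × Fin 5 => q.1 < q.2 ∧ H.Adj q.1 q.2),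
      w5 q.1 * w5 q.2) :
    H.Colorable 2 ∧
    (H.Reachable 0 2 ∧ H.Reachable 0 3 ∧ H.Reachable 0 4) ∧
    (H.dist 0 2 ≤ 2 ∧ H.dist 0 3 ≤ 2 ∧ H.dist 0 4 ≤ 2) ∧
    ∀ c : Fin 5 → ZMod 2, (∀ i j, H.Adj i j → c i ≠ c j) →
      c 0 + c 2 + c 3 + c 4 = 1 := by
  obtain ⟨hcol, hdist, hsum⟩ := stmt_10_general H htf (w := w5) (k := 3) (by decide) (by decide) hw
  have hreach (v : Fin 5) : H.Reachable 0 v :=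
    SimpleGraph.reachable_of_edist_ne_top ((hdist 0 v).trans_lt (by decide)).ne
  have hdist_le (v : Fin 5) : H.dist 0 v ≤ 2 := ENat.toNat_le_of_le_natCast (hdist 0 v)
  refine ⟨hcol, ⟨hreach 2, hreach 3, hreach 4⟩, ⟨hdist_le 2, hdist_le 3, hdist_le 4⟩,
    fun c hc ↦ ?_⟩
  have htwo : (2 : ZMod 2) = 0 := by decide
  have hthree : (3 : ZMod 2) = 1 := by decide
  simpa [Fin.sum_univ_five, w5, htwo, hthree] using hsum c hc
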